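/- Suppose the policy π : S → A → ℝ is fixed (independent of the parameter t) with π s a > 0 for all arguments, while only the transition kernel f depends on t. Then for every t ∈ ℝ the derivative of the stage-k expectation E_k(t) = Σ_τ η(s_k,a_k) · P_k(t)(τ) equals Σ_τ η(s_k,a_k) · P_k(t)(τ) · Σ_{i=0}^{k-1} (d/dt) log(f t s_i a_i s_{i+1}). (Model-parameter specialization of Lemma 1, underlying the estimator for the gradient of the in-sim distribution with respect to the simulator parameters.) -/

import Mathlib

/-!
On a fixed trajectory only the transition factors of the weight depend on the parameter, so the
initial weight and the policy factors come out as a constant. The remaining product is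
differentiated by `(∏ gᵢ)' = (∏ gᵢ) * ∑ gᵢ' / gᵢ`, and `gᵢ' / gᵢ = (log gᵢ)'`.
-/

section LogDeriv

variable {𝕜 𝕜' : Type*} [NontriviallyNormedField 𝕜] [NontriviallyNormedField 𝕜']
  [NormedAlgebra 𝕜 𝕜']

theorem hasDerivAt_mul_logDeriv {g : 𝕜 → 𝕜'} {t : 𝕜} (hg : DifferentiableAt 𝕜 g t)
    (hne : g t ≠ 0) : HasDerivAt g (g t * logDeriv g t) t :=
  hg.hasDerivAt.congr_deriv (mul_div_cancel₀ (deriv g t) hne).symm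

theorem hasDerivAt_finsetProd_mul_sum_logDeriv {ι : Type*} {s : Finset ι} {g : ι → 𝕜 → 𝕜'}
    {t : 𝕜} (hg : ∀ i ∈ s, DifferentiableAt 𝕜 (g i) t) (hne : ∀ i ∈ s, g i t ≠ 0) :
    HasDerivAt (fun x => ∏ i ∈ s, g i x) ((∏ i ∈ s, g i t) * ∑ i ∈ s, logDeriv (g i) t) t := by
  rw [← logDeriv_prod hne hg]
  exact hasDerivAt_mul_logDeriv (.fun_finsetProd hg) (Finset.prod_ne_zero_iff.2 hne)

end LogDeriv

section Trajectory

variable {S A : Type*} {k : ℕ}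

/-- The weight `P_k(τ)` of a trajectory `τ = ((s_0, …, s_k), (a_0, …, a_k))` for the initial weight
`ρ0`, the policy `π` and the transition kernel `p`: the final action `a_k` is drawn from the policy
but triggers no transition. The data are plain functions rather than probability kernels. -/
def trajectoryWeight {M : Type*} [CommMonoid M] (ρ0 : S → M) (π : S → A → M) (p : S → A → S → M)
    (τ : (Fin (k + 1) → S) × (Fin (k + 1) → A)) : M :=
  ρ0 (τ.1 0) * π (τ.1 (Fin.last k)) (τ.2 (Fin.last k)) *
    ∏ i : Fin k,
      (p (τ.1 i.castSucc) (τ.2 i.castSucc) (τ.1 i.succ) * π (τ.1 i.castSucc) (τ.2 i.castSucc))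

theorem trajectoryWeight_eq_mul_prod_transition {M : Type*} [CommMonoid M] (ρ0 : S → M)
    (π : S → A → M) (p : S → A → S → M) (τ : (Fin (k + 1) → S) × (Fin (k + 1) → A)) :
    trajectoryWeight ρ0 π p τ =
      (ρ0 (τ.1 0) * ∏ i, π (τ.1 i) (τ.2 i)) *
        ∏ i : Fin k, p (τ.1 i.castSucc) (τ.2 i.castSucc) (τ.1 i.succ) := by
  rw [trajectoryWeight, Finset.prod_mul_distrib, Fin.prod_univ_castSucc]
  ac_rfl

variable {𝕜 𝕜' : Type*} [NontriviallyNormedField 𝕜] [NontriviallyNormedField 𝕜']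
  [NormedAlgebra 𝕜 𝕜']

theorem hasDerivAt_trajectoryWeight (ρ0 : S → 𝕜') (π : S → A → 𝕜') {f : 𝕜 → S → A → S → 𝕜'}
    {t : 𝕜} (τ : (Fin (k + 1) → S) × (Fin (k + 1) → A))
    (hf : ∀ i : Fin k,
      DifferentiableAt 𝕜 (fun x => f x (τ.1 i.castSucc) (τ.2 i.castSucc) (τ.1 i.succ)) t)
    (hne : ∀ i : Fin k, f t (τ.1 i.castSucc) (τ.2 i.castSucc) (τ.1 i.succ) ≠ 0) :
    HasDerivAt (fun x => trajectoryWeight ρ0 π (f x) τ)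
      (trajectoryWeight ρ0 π (f t) τ *
        ∑ i : Fin k, logDeriv (fun x => f x (τ.1 i.castSucc) (τ.2 i.castSucc) (τ.1 i.succ)) t)
      t := by
  simp only [trajectoryWeight_eq_mul_prod_transition, mul_assoc (ρ0 _ * _)]
  exact (hasDerivAt_finsetProd_mul_sum_logDeriv (fun i _ => hf i) fun i _ => hne i).const_mul _

theorem markov_chain_sensitivity_model_params_general [Fintype S] [Fintype A]
    (k : ℕ) (ρ0 : S → 𝕜') (η π : S → A → 𝕜') (f : 𝕜 → S → A → S → 𝕜') (t : 𝕜)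
    (hf : ∀ s a s', DifferentiableAt 𝕜 (fun x => f x s a s') t)
    (hne : ∀ s a s', f t s a s' ≠ 0) :
    HasDerivAt
      (fun x => ∑ τ : (Fin (k + 1) → S) × (Fin (k + 1) → A),
        η (τ.1 (Fin.last k)) (τ.2 (Fin.last k)) * trajectoryWeight ρ0 π (f x) τ)
      (∑ τ : (Fin (k + 1) → S) × (Fin (k + 1) → A),
        η (τ.1 (Fin.last k)) (τ.2 (Fin.last k)) * trajectoryWeight ρ0 π (f t) τ *
          ∑ i : Fin k, logDeriv (fun x => f x (τ.1 i.castSucc) (τ.2 i.castSucc) (τ.1 i.succ)) t)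
      t := by
  simp only [mul_assoc]
  exact HasDerivAt.fun_sum fun τ _ =>
    (hasDerivAt_trajectoryWeight ρ0 π τ (fun _ => hf _ _ _) fun _ => hne _ _ _).const_mul _

end Trajectory

/-- Model-parameter specialization of Lemma 1: with a fixed policy `π` and a
parameterized transition kernel `f`, the derivative of the stage-`k` expectation equals
`Σ_τ η(s_k,a_k) · P_k(t)(τ) · Σ_{i=0}^{k-1} d/dt log f(s_{i+1}|s_i,a_i)`. -/
theorem markov_chain_sensitivity_model_params
    {S A : Type*} [Fintype S] [Fintype A] [Nonempty S] [Nonempty A]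
    (k : ℕ) (ρ0 : S → ℝ) (η : S → A → ℝ)
    (π : S → A → ℝ) (f : ℝ → S → A → S → ℝ)
    (hπpos : ∀ s a, 0 < π s a)
    (hfpos : ∀ t s a s', 0 < f t s a s')
    (hfdiff : ∀ s a s', Differentiable ℝ (fun t => f t s a s'))
    (P : ℝ → ((Fin (k + 1) → S) × (Fin (k + 1) → A)) → ℝ)
    (hP : ∀ t τ, P t τ =
      ρ0 (τ.1 0) * π (τ.1 (Fin.last k)) (τ.2 (Fin.last k)) *
        ∏ i : Fin k,
          (f t (τ.1 i.castSucc) (τ.2 i.castSucc) (τ.1 i.succ) *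
            π (τ.1 i.castSucc) (τ.2 i.castSucc)))
    (t : ℝ) :
    HasDerivAt
      (fun t => ∑ τ : (Fin (k + 1) → S) × (Fin (k + 1) → A),
        η (τ.1 (Fin.last k)) (τ.2 (Fin.last k)) * P t τ)
      (∑ τ : (Fin (k + 1) → S) × (Fin (k + 1) → A),
        η (τ.1 (Fin.last k)) (τ.2 (Fin.last k)) * P t τ *
          ∑ i : Fin k,
            deriv (fun t =>
              Real.log (f t (τ.1 i.castSucc) (τ.2 i.castSucc) (τ.1 i.succ))) t) t := by
  obtain rfl : P = fun t => trajectoryWeight ρ0 π (f t) := funext₂ hP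
  have deriv_log (s : S) (a : A) (s' : S) :
      deriv (fun x => Real.log (f x s a s')) t = logDeriv (fun x => f x s a s') t :=
    Real.deriv_log_comp_eq_logDeriv (hfdiff s a s' t) (hfpos t s a s').ne'
  simpa only [deriv_log] using markov_chain_sensitivity_model_params_general k ρ0 η π f t
    (hfdiff · · · t) (fun s a s' => (hfpos t s a s').ne')
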